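/- Let l ≥ 1 and let h[l] denote the Cheeger constant of the neighborhood graph Γ[l], and assume 2·h[l] ≤ 1. If l is even, then λ_1 ≤ 1 − (1 − 2h[l])^{1/l} or λ_{N−1} ≥ 1 + (1 − 2h[l])^{1/l}. If l is odd, then λ_1 ≤ 1 − (1 − 2h[l])^{1/l}. -/

import Mathlib

open Finset

noncomputable section

namespace BJ

variable {V : Type*} [Fintype V] [DecidableEq V]

/-- The degree `d_i = ∑_j w_ij` of a vertex. -/
def deg (w : V → V → ℝ) (i : V) : ℝ := ∑ j, w i j

/-- The volume `vol(A) = ∑_{i ∈ A} d_i` of a vertex subset. -/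
def vol (w : V → V → ℝ) (A : Finset V) : ℝ := ∑ i ∈ A, deg w i

/-- The total edge weight `|E(A,B)| = ∑_{i ∈ A, j ∈ B} w_ij` between two vertex subsets. -/
def eW (w : V → V → ℝ) (A B : Finset V) : ℝ := ∑ i ∈ A, ∑ j ∈ B, w i j

/-- The normalized graph Laplacian `(Δu)(i) = u(i) - (1/d_i) ∑_j w_ij u(j)`. -/
def lap (w : V → V → ℝ) (u : V → ℝ) (i : V) : ℝ :=
  u i - (1 / deg w i) * ∑ j, w i j * u j

/-- `lam` is an eigenvalue of the normalized graph Laplacian. -/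
def IsEigen (w : V → V → ℝ) (lam : ℝ) : Prop :=
  ∃ u : V → ℝ, u ≠ 0 ∧ ∀ i, lap w u i = lam * u i

/-- The weighted graph is connected: any two vertices are joined by a chain of
positive-weight edges. -/
def Conn (w : V → V → ℝ) : Prop :=
  ∀ i j : V, Relation.ReflTransGen (fun a b => 0 < w a b) i j

/-- The weighted graph is bipartite: the vertex set splits into two nonempty classes with
no edges inside a class. -/
def Bipartite (w : V → V → ℝ) : Prop :=
  ∃ A : Finset V, A.Nonempty ∧ Aᶜ.Nonempty ∧
    (∀ i ∈ A, ∀ j ∈ A, w i j = 0) ∧ (∀ i ∈ Aᶜ, ∀ j ∈ Aᶜ, w i j = 0)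

/-- The Cheeger constant
`h = min { |E(U,Uᶜ)| / vol(U) : ∅ ≠ U ⊊ V, vol(U) ≤ vol(V)/2 }`. -/
def cheeger (w : V → V → ℝ) : ℝ :=
  sInf { r : ℝ | ∃ U : Finset V, U.Nonempty ∧ U ≠ Finset.univ ∧
    vol w U ≤ vol w Finset.univ / 2 ∧ r = eW w U Uᶜ / vol w U }

/-- The dual Cheeger constant
`h̄ = max { 2|E(V₁,V₂)| / (vol(V₁)+vol(V₂)) }` over pairs of disjoint nonempty vertex sets
`V₁, V₂` (the third class `V₃` of the partition being the complement of `V₁ ∪ V₂`). -/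
def dualCheeger (w : V → V → ℝ) : ℝ :=
  sSup { r : ℝ | ∃ V1 V2 : Finset V, V1.Nonempty ∧ V2.Nonempty ∧ Disjoint V1 V2 ∧
    r = 2 * eW w V1 V2 / (vol w V1 + vol w V2) }

/-- The weights of the neighborhood graph `Γ[l]`:
`w_ij[l] = ∑_{k₁,…,k_{l-1}} w_{i k₁} w_{k₁ k₂} ⋯ w_{k_{l-1} j} / (d_{k₁} ⋯ d_{k_{l-1}})`,
defined recursively (as a matrix, `wl w l = D ⬝ P^l`; in particular `wl w 1 = w`). -/
def wl (w : V → V → ℝ) : ℕ → V → V → ℝ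
  | 0 => fun i j => if i = j then deg w i else 0
  | n + 1 => fun i j => ∑ k, wl w n i k * w k j / deg w k

/-!
Write `D` for the diagonal matrix of degrees. The weights of `Γ[l]` are `D^{1/2} A^l D^{1/2}`, where
`A = D^{-1/2} w D^{-1/2}` is symmetric and has eigenvalues `1 - λ` for `λ` in the spectrum of `Γ`;
so `Γ[l]` has Laplacian eigenvalues `1 - (1 - λ)^l`. The indicator function of an optimal Cheeger
set of `Γ[l]`, shifted to be orthogonal to the constants, has Rayleigh quotient at most `2 h[l]`.
Expand it in eigenvectors of `A`: as `Γ` is connected, those with `λ = 0` come from the constants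
and do not occur, so some `λ ≠ 0` satisfies `1 - 2 h[l] ≤ (1 - λ)^l`. Now take `l`-th roots.
-/

open scoped Matrix

section SpectralTheorem

variable {ι κ : Type*} [Fintype ι] [Fintype κ]

theorem sum_dotProduct_mul_dotProduct (b : OrthonormalBasis κ ℝ (EuclideanSpace ℝ ι))
    (x y : ι → ℝ) : ∑ k, (b k ⬝ᵥ x) * (b k ⬝ᵥ y) = x ⬝ᵥ y := by
  have parseval := b.sum_inner_mul_inner (WithLp.toLp 2 x) (WithLp.toLp 2 y)
  simpa only [EuclideanSpace.inner_eq_star_dotProduct, star_trivial, dotProduct_comm y]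
    using parseval

variable [DecidableEq ι]

theorem pow_mulVec_of_mulVec_eq_smul {R : Type*} [CommSemiring R] {A : Matrix ι ι R} {μ : R}
    {v : ι → R} (hv : A *ᵥ v = μ • v) (n : ℕ) : (A ^ n) *ᵥ v = μ ^ n • v := by
  induction n with
  | zero => simp
  | succ n ih =>
    rw [pow_succ, ← Matrix.mulVec_mulVec, hv, Matrix.mulVec_smul, ih, smul_smul, pow_succ']

theorem dotProduct_pow_mulVec_of_isSymm {R : Type*} [CommSemiring R] {A : Matrix ι ι R}
    (hA : A.IsSymm) {μ : R} {v : ι → R} (hv : A *ᵥ v = μ • v) (n : ℕ) (x : ι → R) :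
    v ⬝ᵥ (A ^ n) *ᵥ x = μ ^ n * (v ⬝ᵥ x) := by
  have pow_transpose : (A ^ n)ᵀ = A ^ n := (hA.pow n).eq
  rw [Matrix.dotProduct_mulVec, ← Matrix.mulVec_transpose, pow_transpose,
    pow_mulVec_of_mulVec_eq_smul hv, smul_dotProduct, smul_eq_mul]

theorem exists_eigenvector_le_pow {A : Matrix ι ι ℝ} (hA : A.IsHermitian) {x : ι → ℝ}
    (hx : x ≠ 0) {c : ℝ} {n : ℕ} (hc : c * (x ⬝ᵥ x) ≤ x ⬝ᵥ (A ^ n) *ᵥ x) :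
    ∃ (μ : ℝ) (v : ι → ℝ), A *ᵥ v = μ • v ∧ v ⬝ᵥ x ≠ 0 ∧ c ≤ μ ^ n := by
  set b := hA.eigenvectorBasis
  set μ := hA.eigenvalues
  have hsymm : A.IsSymm := hA
  have hb (k : ι) : A *ᵥ (b k) = μ k • b k := hA.mulVec_eigenvectorBasis k
  have norm_expansion : x ⬝ᵥ x = ∑ k, (b k ⬝ᵥ x) ^ 2 := by
    simp only [sq, sum_dotProduct_mul_dotProduct]
  have form_expansion : x ⬝ᵥ (A ^ n) *ᵥ x = ∑ k, μ k ^ n * (b k ⬝ᵥ x) ^ 2 := by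
    rw [← sum_dotProduct_mul_dotProduct b]
    refine sum_congr rfl fun k _ => ?_
    rw [dotProduct_pow_mulVec_of_isSymm hsymm (hb k)]
    ring
  by_contra! hlt
  have coeff_zero_or_lt (k : ι) : b k ⬝ᵥ x = 0 ∨ μ k ^ n < c :=
    or_iff_not_imp_left.2 (hlt (μ k) (b k) (hb k))
  obtain ⟨k₀, hk₀⟩ : ∃ k, b k ⬝ᵥ x ≠ 0 := by
    by_contra! hzero
    exact hx (dotProduct_self_eq_zero.1 (by simp [norm_expansion, hzero]))
  refine hc.not_gt ?_
  rw [form_expansion, norm_expansion, mul_sum]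
  refine sum_lt_sum (fun k _ => ?_) ⟨k₀, mem_univ k₀, ?_⟩
  · rcases coeff_zero_or_lt k with hk | hk
    · simp [hk]
    · gcongr
  · have hlt₀ := (coeff_zero_or_lt k₀).resolve_left hk₀
    gcongr

end SpectralTheorem

section DirichletEnergy

variable {V : Type*} [Fintype V] {w : V → V → ℝ}

/-- The Dirichlet energy `½ ∑_{i,j} w_ij (f(i) - f(j))²`, the numerator of the Rayleigh quotient
of the Laplacian. The sum runs over ordered pairs, hence the factor `½`. -/
def dirichletEnergy (w : V → V → ℝ) (f : V → ℝ) : ℝ :=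
  (∑ i, ∑ j, w i j * (f i - f j) ^ 2) / 2

theorem dirichletEnergy_eq_sum_sub_sum (hsym : ∀ i j, w i j = w j i) (f : V → ℝ) :
    dirichletEnergy w f = ∑ i, deg w i * f i ^ 2 - ∑ i, f i * ∑ j, w i j * f j := by
  have row_sum : ∑ i, ∑ j, w i j * f i ^ 2 = ∑ i, deg w i * f i ^ 2 := by
    simp only [deg, sum_mul]
  have col_sum : ∑ i, ∑ j, w i j * f j ^ 2 = ∑ i, deg w i * f i ^ 2 := by
    rw [sum_comm, ← row_sum]
    simp only [hsym]
  have expand : ∑ i, ∑ j, w i j * (f i - f j) ^ 2 =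
      ∑ i, ∑ j, w i j * f i ^ 2 + ∑ i, ∑ j, w i j * f j ^ 2 -
        2 * ∑ i, f i * ∑ j, w i j * f j := by
    simp only [mul_sum, ← sum_add_distrib, ← sum_sub_distrib]
    exact sum_congr rfl fun i _ => sum_congr rfl fun j _ => by ring
  rw [dirichletEnergy, expand, row_sum, col_sum]
  ring

theorem eq_of_dirichletEnergy_eq_zero (hnn : ∀ i j, 0 ≤ w i j) {f : V → ℝ}
    (hf : dirichletEnergy w f = 0) {i j : V} (hij : 0 < w i j) : f i = f j := by
  have term_nonneg (i j : V) : 0 ≤ w i j * (f i - f j) ^ 2 := mul_nonneg (hnn i j) (sq_nonneg _)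
  have total_zero : ∑ i, ∑ j, w i j * (f i - f j) ^ 2 = 0 := by
    rw [dirichletEnergy] at hf
    linarith
  have row_zero := (Fintype.sum_eq_zero_iff_of_nonneg
    fun i => sum_nonneg fun j _ => term_nonneg i j).1 total_zero
  have term_zero := (Fintype.sum_eq_zero_iff_of_nonneg (term_nonneg i)).1 (congrFun row_zero i)
  have sq_zero := (mul_eq_zero.1 (congrFun term_zero j)).resolve_left hij.ne'
  exact sub_eq_zero.1 (sq_eq_zero_iff.1 sq_zero)

theorem lap_eq_one_sub_mul_iff {u : V → ℝ} {i : V} (hdeg : deg w i ≠ 0) {μ : ℝ} :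
    lap w u i = (1 - μ) * u i ↔ ∑ j, w i j * u j = deg w i * (μ * u i) := by
  rw [lap, one_div, sub_mul, one_mul, sub_right_inj, inv_mul_eq_iff_eq_mul₀ hdeg]

theorem eq_of_lap_eq_zero (hsym : ∀ i j, w i j = w j i) (hnn : ∀ i j, 0 ≤ w i j)
    (hdeg : ∀ i, deg w i ≠ 0) (hconn : Conn w) {u : V → ℝ} (hu : ∀ i, lap w u i = 0) (i j : V) :
    u i = u j := by
  have energy_zero : dirichletEnergy w u = 0 := by
    have row (i : V) : ∑ j, w i j * u j = deg w i * (1 * u i) :=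
      (lap_eq_one_sub_mul_iff (hdeg i)).1 (by simp [hu])
    rw [dirichletEnergy_eq_sum_sub_sum hsym, ← sum_sub_distrib]
    exact sum_eq_zero fun i _ => by rw [row]; ring
  have path := hconn i j
  induction path with
  | refl => rfl
  | tail _ hedge ih => exact ih.trans (eq_of_dirichletEnergy_eq_zero hnn energy_zero hedge)

end DirichletEnergy

section NormalizedAdjacency

variable {V : Type*} [Fintype V] {w : V → V → ℝ}

/-- The normalized adjacency matrix `D^{-1/2} w D^{-1/2}`, where `D` is the diagonal matrix of
degrees. It is the symmetric matrix conjugate to the transition matrix `D⁻¹ w = 1 - Δ`, which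
makes the spectral theorem available. -/
def normAdj (w : V → V → ℝ) : Matrix V V ℝ :=
  Matrix.of fun i j => w i j / (√(deg w i) * √(deg w j))

theorem normAdj_isHermitian (hsym : ∀ i j, w i j = w j i) : (normAdj w).IsHermitian := by
  ext i j
  simp [normAdj, hsym i j, mul_comm]

theorem lap_div_sqrt_deg_of_normAdj_mulVec (hdeg : ∀ i, 0 < deg w i) {μ : ℝ} {v : V → ℝ}
    (hv : normAdj w *ᵥ v = μ • v) (i : V) :
    lap w (fun j => v j / √(deg w j)) i = (1 - μ) * (v i / √(deg w i)) := by
  have hi : √(deg w i) ≠ 0 := (Real.sqrt_pos.2 (hdeg i)).ne'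
  have row : ∑ j, w i j * (v j / √(deg w j)) = √(deg w i) * (normAdj w *ᵥ v) i := by
    simp only [Matrix.mulVec, dotProduct, normAdj, Matrix.of_apply, mul_sum]
    refine sum_congr rfl fun j _ => ?_
    field_simp
  rw [lap_eq_one_sub_mul_iff (hdeg i).ne', row, hv, Pi.smul_apply, smul_eq_mul]
  nth_rw 2 [← Real.mul_self_sqrt (hdeg i).le]
  field_simp

theorem isEigen_one_sub_of_normAdj_mulVec (hdeg : ∀ i, 0 < deg w i) {μ : ℝ} {v : V → ℝ}
    (hv₀ : v ≠ 0) (hv : normAdj w *ᵥ v = μ • v) : IsEigen w (1 - μ) := by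
  refine ⟨fun i => v i / √(deg w i), ?_, lap_div_sqrt_deg_of_normAdj_mulVec hdeg hv⟩
  obtain ⟨i, hi⟩ := Function.ne_iff.1 hv₀
  exact Function.ne_iff.2 ⟨i, div_ne_zero hi (Real.sqrt_pos.2 (hdeg i)).ne'⟩

theorem dotProduct_eq_zero_of_normAdj_mulVec_eq_self (hsym : ∀ i j, w i j = w j i)
    (hnn : ∀ i j, 0 ≤ w i j) (hdeg : ∀ i, 0 < deg w i) (hconn : Conn w) {v : V → ℝ}
    (hv : normAdj w *ᵥ v = v) {f : V → ℝ} (hf : ∑ i, deg w i * f i = 0) :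
    v ⬝ᵥ (fun i => √(deg w i) * f i) = 0 := by
  have hv' : normAdj w *ᵥ v = (1 : ℝ) • v := by rw [hv, one_smul]
  have const (i j : V) : v i / √(deg w i) = v j / √(deg w j) :=
    eq_of_lap_eq_zero hsym hnn (fun i => (hdeg i).ne') hconn
      (fun i => by rw [lap_div_sqrt_deg_of_normAdj_mulVec hdeg hv', sub_self, zero_mul]) i j
  rcases isEmpty_or_nonempty V with _ | ⟨⟨o⟩⟩
  · simp [dotProduct]
  have v_eq (i : V) : v i = v o / √(deg w o) * √(deg w i) := by
    rw [← const i o, div_mul_cancel₀ _ (Real.sqrt_pos.2 (hdeg i)).ne']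
  calc v ⬝ᵥ (fun i => √(deg w i) * f i)
      = ∑ i, v o / √(deg w o) * (deg w i * f i) := by
        refine sum_congr rfl fun i _ => ?_
        rw [v_eq i]
        linear_combination v o / √(deg w o) * f i * Real.mul_self_sqrt (hdeg i).le
    _ = 0 := by rw [← mul_sum, hf, mul_zero]

end NormalizedAdjacency

section NeighborhoodGraph

variable {w : V → V → ℝ}

theorem deg_wl (hdeg : ∀ i, deg w i ≠ 0) (n : ℕ) : deg (wl w n) = deg w := by
  induction n with
  | zero => ext i; simp [deg, wl]
  | succ n ih =>
    ext i
    calc deg (wl w (n + 1)) i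
        = ∑ k, ∑ j, wl w n i k * w k j / deg w k := sum_comm
      _ = ∑ k, wl w n i k * deg w k / deg w k := by simp only [← sum_div, ← mul_sum, deg]
      _ = deg (wl w n) i := sum_congr rfl fun k _ => mul_div_cancel_right₀ _ (hdeg k)
      _ = deg w i := congrFun ih i

theorem wl_nonneg (hnn : ∀ i j, 0 ≤ w i j) (n : ℕ) (i j : V) : 0 ≤ wl w n i j := by
  have hdeg (k : V) : 0 ≤ deg w k := sum_nonneg fun j _ => hnn k j
  induction n generalizing j with
  | zero => exact ite_nonneg (hdeg i) le_rfl
  | succ n ih => exact sum_nonneg fun k _ => div_nonneg (mul_nonneg (ih k) (hnn k j)) (hdeg k)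

theorem wl_eq_sqrt_mul_normAdj_pow (hdeg : ∀ i, 0 < deg w i) (n : ℕ) (i j : V) :
    wl w n i j = √(deg w i) * (normAdj w ^ n) i j * √(deg w j) := by
  induction n generalizing j with
  | zero =>
    rcases eq_or_ne i j with rfl | hij
    · simp [wl, Real.mul_self_sqrt (hdeg i).le]
    · simp [wl, hij]
  | succ n ih =>
    simp only [wl, pow_succ, Matrix.mul_apply, mul_sum, sum_mul]
    refine sum_congr rfl fun k _ => ?_
    have hj : √(deg w j) ≠ 0 := (Real.sqrt_pos.2 (hdeg j)).ne'
    have entry : normAdj w k j * √(deg w j) = √(deg w k) / deg w k * w k j := by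
      rw [normAdj, Matrix.of_apply, Real.sqrt_div_self']
      field_simp
    rw [ih k]
    linear_combination (-√(deg w i) * (normAdj w ^ n) i k) * entry

theorem wl_symm (hsym : ∀ i j, w i j = w j i) (hdeg : ∀ i, 0 < deg w i) (n : ℕ) (i j : V) :
    wl w n i j = wl w n j i := by
  have pow_symm : (normAdj w ^ n) j i = (normAdj w ^ n) i j :=
    ((normAdj_isHermitian hsym).pow n).apply i j
  rw [wl_eq_sqrt_mul_normAdj_pow hdeg, wl_eq_sqrt_mul_normAdj_pow hdeg, pow_symm]
  ring

theorem dotProduct_normAdj_pow_mulVec (hdeg : ∀ i, 0 < deg w i) (n : ℕ) (f : V → ℝ) :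
    (fun i => √(deg w i) * f i) ⬝ᵥ (normAdj w ^ n) *ᵥ (fun i => √(deg w i) * f i) =
      ∑ i, f i * ∑ j, wl w n i j * f j := by
  simp only [dotProduct, Matrix.mulVec, wl_eq_sqrt_mul_normAdj_pow hdeg, mul_sum]
  exact sum_congr rfl fun i _ => sum_congr rfl fun j _ => by ring

theorem exists_isEigen_of_dirichletEnergy_wl_le (hsym : ∀ i j, w i j = w j i)
    (hnn : ∀ i j, 0 ≤ w i j) (hdeg : ∀ i, 0 < deg w i) (hconn : Conn w) {l : ℕ} {c : ℝ}
    {f : V → ℝ} (hf₀ : f ≠ 0) (hf : ∑ i, deg w i * f i = 0)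
    (hc : dirichletEnergy (wl w l) f ≤ c * ∑ i, deg w i * f i ^ 2) :
    ∃ μ, IsEigen w μ ∧ μ ≠ 0 ∧ 1 - c ≤ (1 - μ) ^ l := by
  set x : V → ℝ := fun i => √(deg w i) * f i with hx
  have hx₀ : x ≠ 0 := by
    obtain ⟨i, hi⟩ := Function.ne_iff.1 hf₀
    exact Function.ne_iff.2 ⟨i, mul_ne_zero (Real.sqrt_pos.2 (hdeg i)).ne' hi⟩
  have norm_x : x ⬝ᵥ x = ∑ i, deg w i * f i ^ 2 := sum_congr rfl fun i _ => by
    rw [← sq, hx, mul_pow, Real.sq_sqrt (hdeg i).le]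
  have rayleigh : (1 - c) * (x ⬝ᵥ x) ≤ x ⬝ᵥ (normAdj w ^ l) *ᵥ x := by
    rw [dirichletEnergy_eq_sum_sub_sum (wl_symm hsym hdeg l), deg_wl fun i => (hdeg i).ne'] at hc
    rw [dotProduct_normAdj_pow_mulVec hdeg, norm_x]
    linarith
  obtain ⟨ν, v, hv, hvx, hν⟩ :=
    exists_eigenvector_le_pow (normAdj_isHermitian hsym) hx₀ rayleigh
  refine ⟨1 - ν, isEigen_one_sub_of_normAdj_mulVec hdeg ?_ hv, ?_, by rwa [sub_sub_cancel]⟩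
  · rintro rfl
    exact hvx (zero_dotProduct x)
  · intro hν₁
    rw [← sub_eq_zero.1 hν₁, one_smul] at hv
    exact hvx (dotProduct_eq_zero_of_normAdj_mulVec_eq_self hsym hnn hdeg hconn hv hf)

end NeighborhoodGraph

section CheegerConstant

theorem exists_vol_le_half {V : Type*} [Fintype V] (w : V → V → ℝ) (hN : 2 ≤ Fintype.card V) :
    ∃ U : Finset V, U.Nonempty ∧ U ≠ univ ∧ vol w U ≤ vol w univ / 2 := by
  classical
  obtain ⟨i, j, hij⟩ := Fintype.one_lt_card_iff.1 hN
  have hi : ({i} : Finset V) ≠ univ := fun h => by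
    simpa [hij.symm] using h.ge (mem_univ j)
  have vol_split : vol w {i} + vol w {i}ᶜ = vol w univ := sum_add_sum_compl {i} (deg w)
  rcases le_total (vol w {i}) (vol w univ / 2) with hle | hge
  · exact ⟨{i}, singleton_nonempty i, hi, hle⟩
  · refine ⟨{i}ᶜ, ?_, by simp, by linarith⟩
    rwa [nonempty_iff_ne_empty, Ne, compl_eq_empty_iff]

theorem exists_cheeger_eq (w : V → V → ℝ) (hN : 2 ≤ Fintype.card V) :
    ∃ U : Finset V, U.Nonempty ∧ U ≠ univ ∧ vol w U ≤ vol w univ / 2 ∧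
      cheeger w = eW w U Uᶜ / vol w U := by
  obtain ⟨U, hU, hU', hvol⟩ := exists_vol_le_half w hN
  refine Set.Nonempty.csInf_mem (s := {r : ℝ | ∃ U : Finset V, U.Nonempty ∧ U ≠ univ ∧
    vol w U ≤ vol w univ / 2 ∧ r = eW w U Uᶜ / vol w U}) ⟨_, U, hU, hU', hvol, rfl⟩ ?_
  refine (Set.finite_range fun U : Finset V => eW w U Uᶜ / vol w U).subset ?_
  rintro _ ⟨U, -, -, -, rfl⟩
  exact Set.mem_range_self U

/-- The indicator function of `U` minus its mean with respect to the degree measure. It is the test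
function for the Rayleigh quotient in the upper Cheeger bound. -/
def centeredIndicator (w : V → V → ℝ) (U : Finset V) (i : V) : ℝ :=
  (if i ∈ U then 1 else 0) - vol w U / vol w univ

theorem centeredIndicator_ne_zero (w : V → V → ℝ) {U : Finset V} (hU : U.Nonempty)
    (hU' : U ≠ univ) : centeredIndicator w U ≠ 0 := by
  obtain ⟨i, hi⟩ := hU
  obtain ⟨j, hj⟩ := not_forall.1 (mt eq_univ_iff_forall.2 hU')
  intro hzero
  have at_i := congrFun hzero i
  have at_j := congrFun hzero j
  simp only [centeredIndicator, hi, hj, if_true, if_false, Pi.zero_apply] at at_i at_j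
  linarith

theorem sum_deg_mul_centeredIndicator {w : V → V → ℝ} (hV : vol w univ ≠ 0) (U : Finset V) :
    ∑ i, deg w i * centeredIndicator w U i = 0 := by
  calc ∑ i, deg w i * centeredIndicator w U i
      = vol w U - vol w univ * (vol w U / vol w univ) := by
        simp [centeredIndicator, mul_sub, sum_sub_distrib, ← sum_mul, vol]
    _ = 0 := by rw [mul_div_cancel₀ _ hV, sub_self]

theorem sum_deg_mul_centeredIndicator_sq {w : V → V → ℝ} (hV : vol w univ ≠ 0) (U : Finset V) :
    ∑ i, deg w i * centeredIndicator w U i ^ 2 = vol w U * (1 - vol w U / vol w univ) := by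
  set m := vol w U / vol w univ with hm
  have pointwise (i : V) : deg w i * centeredIndicator w U i ^ 2 =
      (if i ∈ U then deg w i * (1 - m) else 0) - m * (deg w i * centeredIndicator w U i) := by
    rw [centeredIndicator, ← hm]
    split_ifs <;> ring
  simp only [pointwise, sum_sub_distrib, ← mul_sum, sum_deg_mul_centeredIndicator hV, sum_ite_mem,
    univ_inter, ← sum_mul, vol, mul_zero, sub_zero]

theorem dirichletEnergy_centeredIndicator {w : V → V → ℝ} (hsym : ∀ i j, w i j = w j i)
    (U : Finset V) : dirichletEnergy w (centeredIndicator w U) = eW w U Uᶜ := by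
  have crossing (i j : V) : w i j * (centeredIndicator w U i - centeredIndicator w U j) ^ 2 =
      (if i ∈ U then if j ∈ Uᶜ then w i j else 0 else 0) +
        (if i ∈ Uᶜ then if j ∈ U then w i j else 0 else 0) := by
    simp only [centeredIndicator, mem_compl]
    split_ifs <;> first | contradiction | ring
  have eW_symm : eW w Uᶜ U = eW w U Uᶜ := by
    rw [eW, sum_comm]
    simp only [eW, hsym]
  have sum_crossing (A B : Finset V) :
      ∑ i, ∑ j, (if i ∈ A then if j ∈ B then w i j else 0 else 0) = eW w A B := by
    simp [eW]
  simp only [dirichletEnergy, crossing, sum_add_distrib, sum_crossing, eW_symm, add_self_div_two]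

theorem exists_dirichletEnergy_le_two_mul_cheeger {w : V → V → ℝ}
    (hsym : ∀ i j, w i j = w j i) (hnn : ∀ i j, 0 ≤ w i j) (hdeg : ∀ i, 0 < deg w i)
    (hN : 2 ≤ Fintype.card V) :
    ∃ f : V → ℝ, f ≠ 0 ∧ ∑ i, deg w i * f i = 0 ∧
      dirichletEnergy w f ≤ 2 * cheeger w * ∑ i, deg w i * f i ^ 2 := by
  obtain ⟨U, hU, hU', hvol, hcheeger⟩ := exists_cheeger_eq w hN
  have vol_pos : 0 < vol w U := sum_pos (fun i _ => hdeg i) hU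
  have vol_univ_pos : 0 < vol w univ := sum_pos (fun i _ => hdeg i) (hU.mono (subset_univ U))
  have cut_nonneg : 0 ≤ eW w U Uᶜ := sum_nonneg fun i _ => sum_nonneg fun j _ => hnn i j
  have mean_le_half : vol w U / vol w univ ≤ 1 / 2 := by
    rw [div_le_iff₀ vol_univ_pos]
    linarith
  refine ⟨centeredIndicator w U, centeredIndicator_ne_zero w hU hU',
    sum_deg_mul_centeredIndicator vol_univ_pos.ne' U, ?_⟩
  rw [dirichletEnergy_centeredIndicator hsym, sum_deg_mul_centeredIndicator_sq vol_univ_pos.ne',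
    hcheeger]
  calc eW w U Uᶜ ≤ eW w U Uᶜ * (2 * (1 - vol w U / vol w univ)) :=
        le_mul_of_one_le_right cut_nonneg (by linarith)
    _ = 2 * (eW w U Uᶜ / vol w U) * (vol w U * (1 - vol w U / vol w univ)) := by field_simp

end CheegerConstant

theorem exists_isEigen_one_sub_two_mul_cheeger_wl_le {w : V → V → ℝ}
    (hsym : ∀ i j, w i j = w j i) (hnn : ∀ i j, 0 ≤ w i j) (hdeg : ∀ i, 0 < deg w i)
    (hconn : Conn w) (hN : 2 ≤ Fintype.card V) (l : ℕ) :
    ∃ μ, IsEigen w μ ∧ μ ≠ 0 ∧ 1 - 2 * cheeger (wl w l) ≤ (1 - μ) ^ l := by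
  have deg_eq : deg (wl w l) = deg w := deg_wl (fun i => (hdeg i).ne') l
  obtain ⟨f, hf₀, hf, henergy⟩ := exists_dirichletEnergy_le_two_mul_cheeger
    (wl_symm hsym hdeg l) (wl_nonneg hnn l) (by rwa [deg_eq]) hN
  rw [deg_eq] at hf henergy
  exact exists_isEigen_of_dirichletEnergy_wl_le hsym hnn hdeg hconn hf₀ hf henergy

theorem rpow_one_div_le_abs_of_le_pow {s x : ℝ} {n : ℕ} (hs : 0 ≤ s) (hn : n ≠ 0)
    (h : s ≤ x ^ n) : s ^ ((1 : ℝ) / n) ≤ |x| := by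
  rw [one_div, Real.rpow_inv_le_iff_of_pos hs (abs_nonneg x) (by positivity), Real.rpow_natCast,
    ← abs_pow]
  exact h.trans (le_abs_self _)

/-- Corollary: upper bound for `λ₁` or lower bound for `λ_{N-1}` via
the Cheeger constant `h[l]` of the neighborhood graph. Assume `2 h[l] ≤ 1`. If `l` is
even, then `λ₁ ≤ 1 - (1 - 2h[l])^{1/l}` or `λ_{N-1} ≥ 1 + (1 - 2h[l])^{1/l}`; if `l` is
odd, then `λ₁ ≤ 1 - (1 - 2h[l])^{1/l}`. -/
theorem eigenvalue_alternative_from_neighborhood_cheeger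
    (w : V → V → ℝ)
    (hsym : ∀ i j, w i j = w j i) (hnn : ∀ i j, 0 ≤ w i j)
    (hdeg : ∀ i, 0 < deg w i) (hconn : Conn w) (hN : 2 ≤ Fintype.card V)
    (lam1 lamN : ℝ)
    (hlam1 : IsEigen w lam1) (hlam1pos : 0 < lam1)
    (hlam1min : ∀ μ, IsEigen w μ → μ ≠ 0 → lam1 ≤ μ)
    (hlamN : IsEigen w lamN) (hlamNmax : ∀ μ, IsEigen w μ → μ ≤ lamN)
    (l : ℕ) (hl : 1 ≤ l)
    (hhl : 2 * cheeger (wl w l) ≤ 1) :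
    (Even l →
        lam1 ≤ 1 - (1 - 2 * cheeger (wl w l)) ^ ((1 : ℝ) / l) ∨
          1 + (1 - 2 * cheeger (wl w l)) ^ ((1 : ℝ) / l) ≤ lamN) ∧
      (Odd l → lam1 ≤ 1 - (1 - 2 * cheeger (wl w l)) ^ ((1 : ℝ) / l)) := by
  obtain ⟨μ, hμ, hμ₀, hpow⟩ :=
    exists_isEigen_one_sub_two_mul_cheeger_wl_le hsym hnn hdeg hconn hN l
  have lam1_le : lam1 ≤ μ := hlam1min μ hμ hμ₀
  have le_lamN : μ ≤ lamN := hlamNmax μ hμ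
  have base_nonneg : 0 ≤ 1 - 2 * cheeger (wl w l) := sub_nonneg.2 hhl
  have root_le := rpow_one_div_le_abs_of_le_pow base_nonneg (Nat.one_le_iff_ne_zero.1 hl) hpow
  constructor
  · intro _
    rcases le_abs.1 root_le with hroot | hroot
    · exact Or.inl (by linarith)
    · exact Or.inr (by linarith)
  · intro hodd
    rw [abs_of_nonneg (hodd.pow_nonneg_iff.1 (base_nonneg.trans hpow))] at root_le
    linarith

end BJ
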